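/- Every Legendre multiplier sequence is a Hermite multiplier sequence: if (γ_k)_{k=0}^∞ is a Legendre multiplier sequence, then the linear operator on ℝ[x] sending the k-th Hermite polynomial He_k to γ_k·He_k maps hyperbolic polynomials to hyperbolic polynomials. -/

import Mathlib

open Polynomial

/-- A real polynomial is *hyperbolic* if all of its complex roots are real
(the zero polynomial and nonzero constants are vacuously hyperbolic). -/
def Hyperbolic (p : Polynomial ℝ) : Prop :=
  ∀ z ∈ (p.map (algebraMap ℝ ℂ)).roots, z.im = 0

/-- `γ` is a multiplier sequence for the simple set `q`: the linear operator
sending `q k` to `γ k • q k` maps hyperbolic polynomials to hyperbolic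
polynomials.  (Since `q` is a simple set, every real polynomial has a unique
expansion `∑ a k • q k`, so this quantification over coefficient families
expresses exactly that property.) -/
def IsMultiplierSeqFor (q : ℕ → Polynomial ℝ) (γ : ℕ → ℝ) : Prop :=
  ∀ (n : ℕ) (a : ℕ → ℝ),
    Hyperbolic (∑ k ∈ Finset.range n, C (a k) * q k) →
    Hyperbolic (∑ k ∈ Finset.range n, C (γ k * a k) * q k)

/-- The Legendre polynomials, via Rodrigues' formula
`Le n = (1/(2^n n!)) Dⁿ[(x²-1)ⁿ]`. -/
noncomputable def legendre (n : ℕ) : Polynomial ℝ :=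
  C (1 / (2 ^ n * n.factorial : ℝ)) * derivative^[n] ((X ^ 2 - 1) ^ n)

/-- A Legendre multiplier sequence. -/
def IsLegendreMS (γ : ℕ → ℝ) : Prop := IsMultiplierSeqFor legendre γ

/-- The (probabilists') Hermite polynomials, as real polynomials. -/
noncomputable def hermiteR (n : ℕ) : Polynomial ℝ :=
  (Polynomial.hermite n).map (Int.castRingHom ℝ)

/-!
A Legendre multiplier sequence `γ` is also one for the monomials, as dilations show. Since the
highest coefficients of the Legendre polynomials alternate in sign, real-rootedness of the images of
`x ^ (k + 2)` and `x ^ (k + 2) * (x ^ 2 - c)` then forces `γ` either to vanish off two consecutive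
indices or to be supported on a half-line, where `|γ|` is nondecreasing and the signs are constant
or alternate. Multiplying by `±1` or `±(-1) ^ k` is harmless on the Hermite side, so let `γ` be
nonnegative and nondecreasing.

The Jensen polynomials `∑ j, (n choose j) Δ^j γ (m) x ^ j` are real-rooted. The discriminants of the
cubic ones show that all differences `Δ^j γ` are nonnegative, so the zeros of these polynomials are
nonpositive. By Newton's formula `γ` is a limit of sequences `k ↦ ∑ j, qⱼ k (k - 1) ⋯ (k - j + 1)`
with `q` such a polynomial up to scaling. A linear factor `x + c` of `q` amounts to replacing the
Hermite multiplier `T` by `c T + (x - D) T D`, which keeps polynomials without zeros in the upper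
half plane so.
-/

open Filter Topology

section UpperHalfPlane

/-- A complex polynomial is stable (with respect to the open upper half plane) if it has no zero
there. In particular the zero polynomial is not stable. -/
def IsUpperStable (p : ℂ[X]) : Prop := ∀ z : ℂ, 0 < z.im → p.eval z ≠ 0

variable {f g p : ℂ[X]}

lemma isUpperStable_C {a : ℂ} (ha : a ≠ 0) : IsUpperStable (C a) := fun z _ => by simpa using ha

lemma IsUpperStable.C_mul (hp : IsUpperStable p) {a : ℂ} (ha : a ≠ 0) :
    IsUpperStable (C a * p) := fun z hz => by simpa [ha] using hp z hz

lemma im_one_div_sub_neg {z r : ℂ} (h : r.im < z.im) : (1 / (z - r)).im < 0 := by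
  have him : 0 < (z - r).im := by simpa using h
  have hne : z - r ≠ 0 := fun h0 => by simp [h0] at him
  rw [one_div, Complex.inv_im]
  exact div_neg_of_neg_of_pos (by linarith) (Complex.normSq_pos.2 hne)

lemma IsUpperStable.logDeriv_im_neg (hp : IsUpperStable p) (hdeg : p.natDegree ≠ 0) {z : ℂ}
    (hz : 0 < z.im) : (p.derivative.eval z / p.eval z).im < 0 := by
  have hsplits := IsAlgClosed.splits p
  rw [hsplits.eval_derivative_div_eval_of_ne_zero (hp z hz), ← Complex.coe_imAddGroupHom,
    map_multiset_sum, Multiset.map_map]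
  refine (Multiset.sum_lt_sum_of_nonempty (g := fun _ => 0) (hsplits.roots_ne_zero hdeg)
    fun r hr => ?_).trans_eq (by simp)
  refine im_one_div_sub_neg (lt_of_le_of_lt (not_lt.1 fun hr' => hp r hr' ?_) hz)
  exact isRoot_of_mem_roots hr

lemma IsUpperStable.logDeriv_im_nonpos (hp : IsUpperStable p) {z : ℂ} (hz : 0 < z.im) :
    (p.derivative.eval z / p.eval z).im ≤ 0 := by
  by_cases hdeg : p.natDegree = 0
  · simp [derivative_of_natDegree_zero hdeg]
  · exact (hp.logDeriv_im_neg hdeg hz).le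

protected lemma IsUpperStable.derivative (hp : IsUpperStable p) (hdeg : p.natDegree ≠ 0) :
    IsUpperStable p.derivative := fun z hz h0 => by
  simpa [h0] using hp.logDeriv_im_neg hdeg hz

lemma IsUpperStable.add_C_mul_derivative (hp : IsUpperStable p) {l : ℂ} (hl : 0 ≤ l.im) :
    IsUpperStable (p + C l * p.derivative) := by
  intro z hz h0
  have hpz := hp z hz
  by_cases hdeg : p.natDegree = 0
  · simp [derivative_of_natDegree_zero hdeg, hpz] at h0
  have hdz := hp.derivative hdeg z hz
  have hl_eq : (p.derivative.eval z / p.eval z) * -l = 1 := by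
    simp only [eval_add, eval_mul, eval_C] at h0
    field_simp
    linear_combination -h0
  have hinv : -l = p.eval z / p.derivative.eval z := by
    field_simp at hl_eq ⊢
    exact hl_eq
  have him := hp.logDeriv_im_neg hdeg hz
  rw [← inv_div, ← hinv, Complex.inv_im] at him
  have : 0 ≤ -(-l).im / Complex.normSq (-l) :=
    div_nonneg (by simpa using hl) (Complex.normSq_nonneg _)
  exact absurd him (not_lt.2 this)

/-- Dividing by `f`, the imaginary parts of `g / f`, of `X` and of `-f' / f` have the same sign on
the upper half plane. -/
lemma IsUpperStable.add_X_mul_sub_derivative (hf : IsUpperStable f)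
    (hg : ∀ z : ℂ, 0 < z.im → 0 ≤ (g.eval z / f.eval z).im) :
    IsUpperStable (g + (X * f - derivative f)) := by
  intro z hz h0
  have hfz := hf z hz
  have hsum : g.eval z / f.eval z + z - f.derivative.eval z / f.eval z = 0 := by
    simp only [eval_add, eval_mul, eval_sub, eval_X] at h0
    field_simp
    linear_combination h0
  have him := congrArg Complex.im hsum
  simp only [Complex.sub_im, Complex.add_im, Complex.zero_im] at him
  linarith [hg z hz, hf.logDeriv_im_nonpos hz]

/-- The operator `p ↦ c T p + X T p' - (T p')'` inherits stability from `T`: since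
`T p + l T p' = T (p + l p')` is stable for all `l` with `0 ≤ im l`, the quotient `T p / T p'` takes
values in the upper half plane. -/
lemma isUpperStable_C_mul_map_add_X_mul_sub_derivative {T : ℂ[X] →ₗ[ℂ] ℂ[X]}
    (hT : ∀ p, IsUpperStable p → IsUpperStable (T p)) {c : ℝ} (hc : 0 < c) (hp : IsUpperStable p) :
    IsUpperStable (C (c : ℂ) * T p + (X * T p.derivative - (T p.derivative).derivative)) := by
  by_cases hdeg : p.natDegree = 0
  · simpa [derivative_of_natDegree_zero hdeg] using (hT p hp).C_mul (by simpa using hc.ne')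
  have hf := hT _ (hp.derivative hdeg)
  refine hf.add_X_mul_sub_derivative fun z hz => ?_
  have hfz := hf z hz
  rw [eval_mul, eval_C, mul_div_assoc, Complex.im_ofReal_mul]
  refine mul_nonneg hc.le (not_lt.1 fun hneg => ?_)
  have hcomb := hT _ (hp.add_C_mul_derivative
    (l := -((T p).eval z / (T p.derivative).eval z)) (by simpa using hneg.le)) z hz
  refine hcomb ?_
  rw [← smul_eq_C_mul, map_add, map_smul, eval_add, eval_smul, smul_eq_mul]
  field_simp
  ring

end UpperHalfPlane

section Splits

variable {p : ℝ[X]}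

lemma Hyperbolic.splits (hp : Hyperbolic p) : p.Splits :=
  .of_splits_map (algebraMap ℝ ℂ) (IsAlgClosed.splits _) fun z hz =>
    ⟨z.re, Complex.ext rfl (hp z hz).symm⟩

lemma hyperbolic_iff_splits : Hyperbolic p ↔ p.Splits := by
  refine ⟨Hyperbolic.splits, fun hp z hz => ?_⟩
  rw [hp.roots_map, Multiset.mem_map] at hz
  obtain ⟨r, -, rfl⟩ := hz
  exact Complex.ofReal_im r

lemma splits_of_isUpperStable_map (hp : IsUpperStable (p.map (algebraMap ℝ ℂ))) : p.Splits := by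
  refine hyperbolic_iff_splits.1 fun z hz => le_antisymm ?_ ?_ <;>
    refine not_lt.1 fun him => ?_
  · exact hp z him (isRoot_of_mem_roots hz)
  · refine hp (starRingEnd ℂ z) (by simpa using him) ?_
    have hz0 : aeval z p = 0 := by simpa [eval_map_algebraMap] using isRoot_of_mem_roots hz
    rw [eval_map_algebraMap, aeval_conj, hz0, map_zero]

lemma isUpperStable_map_of_splits (hp : p.Splits) (h0 : p ≠ 0) :
    IsUpperStable (p.map (algebraMap ℝ ℂ)) := fun z hz hroot =>
  hz.ne' <| hyperbolic_iff_splits.2 hp z <|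
    (mem_roots ((Polynomial.map_ne_zero_iff (algebraMap ℝ ℂ).injective).2 h0)).2 hroot

lemma norm_aeval_le_of_splits (hp : p.Splits) (x : ℝ) {y₁ y₂ : ℝ} (hy₁ : 0 ≤ y₁) (hy : y₁ ≤ y₂) :
    ‖aeval (⟨x, y₁⟩ : ℂ) p‖ ≤ ‖aeval (⟨x, y₂⟩ : ℂ) p‖ := by
  induction hp using Submonoid.closure_induction with
  | mem f hf =>
    rcases hf with ⟨a, rfl⟩ | ⟨a, rfl⟩
    · simp
    · refine Real.sqrt_le_sqrt ?_
      simp only [map_add, aeval_X, aeval_C, Complex.coe_algebraMap, Complex.normSq_apply,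
        Complex.add_re, Complex.add_im, Complex.ofReal_re, Complex.ofReal_im, add_zero]
      nlinarith
  | one => simp
  | mul f g _ _ hf hg =>
    simp only [map_mul, norm_mul]
    gcongr

lemma splits_iff_norm_aeval_le : p.Splits ↔ ∀ x y₁ y₂ : ℝ, 0 ≤ y₁ → y₁ ≤ y₂ →
    ‖aeval (⟨x, y₁⟩ : ℂ) p‖ ≤ ‖aeval (⟨x, y₂⟩ : ℂ) p‖ := by
  refine ⟨fun hp x _ _ => norm_aeval_le_of_splits hp x, fun hmono => ?_⟩
  by_cases hp0 : p = 0
  · simp [hp0]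
  refine splits_of_isUpperStable_map fun z hz hroot => hp0 ?_
  rw [eval_map_algebraMap] at hroot
  refine (Polynomial.map_eq_zero (algebraMap ℝ ℂ)).1 (eq_zero_of_infinite_isRoot _ ?_)
  have hinj : Function.Injective (Complex.mk z.re) := fun a b hab => congrArg Complex.im hab
  refine ((Set.Icc_infinite hz).image hinj.injOn).mono ?_
  rintro _ ⟨y, ⟨hy0, hy⟩, rfl⟩
  have hle : ‖aeval (⟨z.re, y⟩ : ℂ) p‖ ≤ ‖aeval z p‖ := hmono z.re y z.im hy0 hy
  rw [hroot, norm_zero] at hle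
  simpa [eval_map_algebraMap] using hle

lemma splits_of_tendsto_aeval {ι : Type*} {l : Filter ι} [l.NeBot] {P : ι → ℝ[X]}
    (hP : ∀ᶠ i in l, (P i).Splits)
    (hlim : ∀ z : ℂ, Tendsto (fun i => aeval z (P i)) l (𝓝 (aeval z p))) : p.Splits := by
  refine splits_iff_norm_aeval_le.2 fun x y₁ y₂ hy₁ hy => ?_
  refine le_of_tendsto_of_tendsto (hlim ⟨x, y₁⟩).norm (hlim ⟨x, y₂⟩).norm ?_
  filter_upwards [hP] with i hi using norm_aeval_le_of_splits hi x hy₁ hy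

lemma splits_derivative (hp : p.Splits) : p.derivative.Splits := by
  rw [splits_iff_card_roots]
  have h1 := p.card_roots_le_derivative
  have h2 := p.natDegree_derivative_le
  have h3 := p.derivative.card_roots'
  rw [← hp.natDegree_eq_card_roots] at h1
  omega

lemma splits_comp_C_mul_X (hp : p.Splits) (c : ℝ) : (p.comp (C c * X)).Splits :=
  hp.comp_of_natDegree_le_one ((natDegree_C_mul_le c X).trans natDegree_X_le)

end Splits

open scoped fwdDiff

section CoefficientInequalities

lemma discrim_nonneg_of_splits {a b c : ℝ} (h : (C a * X ^ 2 + C b * X + C c).Splits) :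
    0 ≤ discrim a b c := by
  rcases eq_or_ne a 0 with rfl | ha
  · simpa [discrim] using sq_nonneg b
  obtain ⟨x, hx⟩ := h.exists_eval_eq_zero (by rw [degree_quadratic ha]; norm_num)
  rw [discrim_eq_sq_of_quadratic_eq_zero (x := x)]
  · positivity
  · simpa [pow_two] using hx

lemma cubic_discr_nonneg_of_splits {P : Cubic ℝ} (h : P.toPoly.Splits) : 0 ≤ P.discr := by
  by_cases ha : P.a = 0
  · have hquad : 0 ≤ discrim P.b P.c P.d :=
      discrim_nonneg_of_splits (by rwa [Cubic.of_a_eq_zero ha] at h)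
    have : P.discr = P.b ^ 2 * discrim P.b P.c P.d := by
      simp only [Cubic.discr, discrim, ha]; ring
    rw [this]
    positivity
  · rw [← Polynomial.map_id (p := P.toPoly)] at h
    obtain ⟨x, y, z, hroots⟩ := (Cubic.splits_iff_roots_eq_three ha).1 h
    have := Cubic.discr_eq_prod_three_roots ha hroots
    rw [RingHom.id_apply] at this
    rw [this]
    positivity

/-- For `p = p(0) ∏ (1 - X / rᵢ)` the quantity is `p(0)² ∑ 1 / rᵢ²`; the proof uses its additivity
in the logarithmic sense, which makes sense also when `p(0) = 0`. -/
lemma two_mul_coeff_zero_mul_coeff_two_le {p : ℝ[X]} (hp : p.Splits) :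
    2 * (p.coeff 0 * p.coeff 2) ≤ p.coeff 1 ^ 2 := by
  induction hp using Submonoid.closure_induction with
  | mem f hf => rcases hf with ⟨a, rfl⟩ | ⟨a, rfl⟩ <;> simp [coeff_X, coeff_C]
  | one => simp [coeff_one]
  | mul f g _ _ hf hg =>
    simp only [coeff_mul, Finset.Nat.antidiagonal_zero, Finset.sum_singleton,
      Finset.Nat.sum_antidiagonal_succ, zero_add, Nat.reduceAdd]
    nlinarith [mul_nonneg (sq_nonneg (f.coeff 0)) (sub_nonneg.2 hg),
      mul_nonneg (sq_nonneg (g.coeff 0)) (sub_nonneg.2 hf)]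

lemma natDegree_eq_zero_of_splits_of_coeff_eq_zero {p : ℝ[X]} (hp : p.Splits) (h0 : p.coeff 0 ≠ 0)
    (h1 : p.coeff 1 = 0) (h2 : p.coeff 2 = 0) : p.natDegree = 0 := by
  by_contra hdeg
  obtain ⟨r, hr⟩ := hp.exists_eval_eq_zero (fun h => hdeg (natDegree_eq_of_degree_eq_some h))
  obtain ⟨g, rfl⟩ := dvd_iff_isRoot.2 hr
  have hg : g.Splits := splits_X_sub_C_mul_iff.1 hp
  have hle := two_mul_coeff_zero_mul_coeff_two_le hg
  have hg0 : g.coeff 0 ≠ 0 := by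
    rw [mul_coeff_zero] at h0
    exact right_ne_zero_of_mul h0
  have hg1 : g.coeff 0 = r * g.coeff 1 := sub_eq_zero.1 (coeff_X_sub_C_mul.symm.trans h1)
  have hg2 : g.coeff 1 = r * g.coeff 2 := sub_eq_zero.1 (coeff_X_sub_C_mul.symm.trans h2)
  have hpos : 0 < g.coeff 1 ^ 2 := by
    have : g.coeff 1 ≠ 0 := fun h => hg0 (by rw [hg1, h, mul_zero])
    positivity
  have : g.coeff 0 * g.coeff 2 = g.coeff 1 ^ 2 := by rw [hg1, pow_two, hg2]; ring
  linarith

lemma splits_iterate_derivative {p : ℝ[X]} (hp : p.Splits) (n : ℕ) :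
    (derivative^[n] p).Splits := by
  induction n with
  | zero => exact hp
  | succ n ih => rw [Function.iterate_succ_apply']; exact splits_derivative ih

lemma coeff_mul_coeff_add_two_nonpos {p : ℝ[X]} (hp : p.Splits) {n : ℕ} (h1 : p.coeff (n + 1) = 0) :
    p.coeff n * p.coeff (n + 2) ≤ 0 := by
  have h := two_mul_coeff_zero_mul_coeff_two_le (splits_iterate_derivative hp n)
  simp only [coeff_iterate_derivative, nsmul_eq_mul, zero_add, add_comm 1 n, add_comm 2 n, h1,
    mul_zero] at h
  have hpos : 0 < (n.descFactorial n : ℝ) * (n + 2).descFactorial n := by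
    have h₁ := Nat.descFactorial_pos.2 (le_refl n)
    have h₂ := Nat.descFactorial_pos.2 (show n ≤ n + 2 by omega)
    positivity
  refine nonpos_of_mul_nonpos_right (a := (n.descFactorial n : ℝ) * (n + 2).descFactorial n) ?_ hpos
  linarith

end CoefficientInequalities

section Jensen

/-- The Jensen polynomial `∑ j ≤ n, (n choose j) γ j X ^ j` of degree `n` of a real sequence. -/
noncomputable def jensen (n : ℕ) (γ : ℕ → ℝ) : ℝ[X] :=
  ∑ j ∈ Finset.range (n + 1), monomial j (n.choose j * γ j)

lemma coeff_jensen (n : ℕ) (γ : ℕ → ℝ) (j : ℕ) : (jensen n γ).coeff j = n.choose j * γ j := by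
  simp only [jensen, finsetSum_coeff, coeff_monomial, Finset.sum_ite_eq', Finset.mem_range]
  split_ifs with hj
  · rfl
  · rw [Nat.choose_eq_zero_of_lt (by omega), Nat.cast_zero, zero_mul]

lemma jensen_succ (n : ℕ) (γ : ℕ → ℝ) :
    jensen (n + 1) γ = jensen n γ + X * jensen n (fun k => γ (k + 1)) := by
  ext (_ | j)
  · simp [coeff_jensen]
  · simp only [coeff_add, coeff_X_mul, coeff_jensen, Nat.choose_succ_succ]
    push_cast
    ring

lemma jensen_fwdDiff (n : ℕ) (γ : ℕ → ℝ) :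
    jensen n (Δ_[1] γ) = jensen n (fun k => γ (k + 1)) - jensen n γ := by
  ext j
  simp only [coeff_sub, coeff_jensen, fwdDiff]
  ring

lemma derivative_jensen (n : ℕ) (γ : ℕ → ℝ) :
    derivative (jensen (n + 1) γ) = C ((n : ℝ) + 1) * jensen n (fun k => γ (k + 1)) := by
  ext j
  have hchoose : ((n : ℝ) + 1) * n.choose j = (n + 1).choose (j + 1) * ((j : ℝ) + 1) := mod_cast
    Nat.add_one_mul_choose_eq n j
  rw [coeff_derivative, coeff_C_mul, coeff_jensen, coeff_jensen]
  linear_combination -γ (j + 1) * hchoose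

lemma mul_le_sq_of_splits_jensen {γ : ℕ → ℝ} (h : (jensen 2 γ).Splits) :
    γ 0 * γ 2 ≤ γ 1 ^ 2 := by
  have hquad : jensen 2 γ = C (γ 2) * X ^ 2 + C (2 * γ 1) * X + C (γ 0) := by
    simp only [jensen, Finset.sum_range_succ, Finset.sum_range_zero, ← C_mul_X_pow_eq_monomial]
    norm_num
    ring
  rw [hquad] at h
  have := discrim_nonneg_of_splits h
  simp only [discrim] at this
  linarith

lemma sq_le_mul_of_splits_jensen {γ : ℕ → ℝ} (h : (jensen 3 γ).Splits) :
    (γ 1 * γ 2 - γ 0 * γ 3) ^ 2 ≤ 4 * (γ 1 ^ 2 - γ 0 * γ 2) * (γ 2 ^ 2 - γ 1 * γ 3) := by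
  have hcubic : jensen 3 γ = (⟨γ 3, 3 * γ 2, 3 * γ 1, γ 0⟩ : Cubic ℝ).toPoly := by
    simp only [jensen, Cubic.toPoly, Finset.sum_range_succ, Finset.sum_range_zero,
      ← C_mul_X_pow_eq_monomial]
    norm_num [Nat.choose]
    ring
  rw [hcubic] at h
  have := cubic_discr_nonneg_of_splits h
  simp only [Cubic.discr] at this
  linarith

lemma aeval_jensen_iterate_fwdDiff (n : ℕ) (γ : ℕ → ℝ) {z : ℂ} (hz : z ≠ 1) :
    aeval z (jensen n fun j => (Δ_[1])^[j] γ 0) =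
      (1 - z) ^ n * aeval (z / (1 - z)) (jensen n γ) := by
  have hz' : 1 - z ≠ 0 := sub_ne_zero.2 hz.symm
  induction n generalizing γ with
  | zero => simp [jensen]
  | succ n ih =>
    simp only [jensen_succ, map_add, map_mul, aeval_X, Function.iterate_succ_apply, ih,
      jensen_fwdDiff, map_sub]
    field_simp
    ring

lemma jensen_iterate_fwdDiff_eq_zero {n : ℕ} {γ : ℕ → ℝ} (h : jensen n γ = 0) :
    (jensen n fun j => (Δ_[1])^[j] γ 0) = 0 := by
  refine (Polynomial.map_eq_zero (algebraMap ℝ ℂ)).1 (eq_zero_of_infinite_isRoot _ ?_)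
  refine (Set.finite_singleton (1 : ℂ)).infinite_compl.mono fun z hz => ?_
  change eval z _ = 0
  rw [eval_map_algebraMap, aeval_jensen_iterate_fwdDiff n γ hz, h, map_zero, mul_zero]

/-- The Möbius map `z ↦ z / (1 - z)` preserves the upper half plane. -/
lemma splits_jensen_iterate_fwdDiff {n : ℕ} {γ : ℕ → ℝ} (h : (jensen n γ).Splits) :
    (jensen n fun j => (Δ_[1])^[j] γ 0).Splits := by
  by_cases h0 : jensen n γ = 0
  · rw [jensen_iterate_fwdDiff_eq_zero h0]
    exact .zero
  refine splits_of_isUpperStable_map fun z hz hroot => ?_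
  have hz1 : z ≠ 1 := fun h1 => by simp [h1] at hz
  have hz' : 1 - z ≠ 0 := sub_ne_zero.2 hz1.symm
  rw [eval_map_algebraMap, aeval_jensen_iterate_fwdDiff n γ hz1,
    mul_eq_zero_iff_left (pow_ne_zero n hz'), ← eval_map_algebraMap] at hroot
  refine isUpperStable_map_of_splits h h0 _ ?_ hroot
  have hw : z / (1 - z) = 1 / (1 - z) - 1 := by field_simp; ring
  rw [hw, Complex.sub_im, one_div, Complex.inv_im]
  simp only [Complex.sub_im, Complex.one_im, zero_sub, neg_neg, sub_zero]
  exact div_pos hz (Complex.normSq_pos.2 hz')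

/-- A real sequence all of whose difference sequences `j ↦ Δ^j γ (m)` have real-rooted Jensen
polynomials. Unlike real-rootedness of the Jensen polynomials of `γ` and its shifts, from which it
follows, this property passes from `γ` to `Δ γ`. -/
def HasSplitDifferenceJensen (γ : ℕ → ℝ) : Prop :=
  ∀ m n, (jensen n fun j => (Δ_[1])^[j] γ m).Splits

lemma HasSplitDifferenceJensen.of_splits_jensen {γ : ℕ → ℝ}
    (h : ∀ m n, (jensen n fun k => γ (k + m)).Splits) : HasSplitDifferenceJensen γ := by
  intro m n
  simpa only [fwdDiff_iter_comp_add, zero_add] using splits_jensen_iterate_fwdDiff (h m n)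

protected lemma HasSplitDifferenceJensen.fwdDiff {γ : ℕ → ℝ} (h : HasSplitDifferenceJensen γ) :
    HasSplitDifferenceJensen (Δ_[1] γ) := by
  intro m n
  have hderiv := splits_derivative (h m (n + 1))
  rw [derivative_jensen] at hderiv
  exact (splits_mul_iff_right (C_ne_zero.2 n.cast_add_one_ne_zero) (.C _)).1 hderiv

lemma HasSplitDifferenceJensen.mul_le_sq {γ : ℕ → ℝ} (h : HasSplitDifferenceJensen γ) (m : ℕ) :
    γ m * γ (m + 2) ≤ γ (m + 1) ^ 2 := by
  have := mul_le_sq_of_splits_jensen (h m 2)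
  simp only [Function.iterate_succ_apply, Function.iterate_zero_apply, fwdDiff] at this
  linarith

end Jensen

section DifferencePositivity

variable {γ : ℕ → ℝ}

/-- The discriminant of the cubic Jensen polynomial of `j ↦ Δ^j γ (m)`. -/
lemma HasSplitDifferenceJensen.cubic_inequality (h : HasSplitDifferenceJensen γ) {M u v w : ℝ}
    {m : ℕ} (hM : γ m = M) (hu : Δ_[1] γ m = u) (hv : Δ_[1] γ (m + 1) = v)
    (hw : Δ_[1] γ (m + 2) = w) :
    (u * (u - v) + M * (w - 2 * v + u)) ^ 2 ≤
      4 * (u ^ 2 + M * (u - v)) * (v ^ 2 - u * w) := by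
  have hcubic := sq_le_mul_of_splits_jensen (h m 3)
  simp only [Function.iterate_succ_apply, Function.iterate_zero_apply] at hcubic
  have h2 : Δ_[1] (Δ_[1] γ) m = v - u := by rw [← hv, ← hu]; rfl
  have h3 : Δ_[1] (Δ_[1] (Δ_[1] γ)) m = w - 2 * v + u := by
    rw [← hw, ← hv, ← hu]; simp only [fwdDiff]; ring
  rw [hM, hu, h2, h3] at hcubic
  linarith

lemma HasSplitDifferenceJensen.fwdDiff_pos_of_lt (h : HasSplitDifferenceJensen γ)
    (hγ : ∀ m, 0 ≤ γ m) (hδ : ∀ m, 0 ≤ Δ_[1] γ m) {m : ℕ}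
    (hlt : Δ_[1] γ (m + 1) < Δ_[1] γ m) : 0 < Δ_[1] γ (m + 1) := by
  refine (hδ (m + 1)).lt_of_ne' fun hv => ?_
  have hu : 0 < Δ_[1] γ m := hv ▸ hlt
  have hw : Δ_[1] γ (m + 2) = 0 := by
    have := h.fwdDiff.mul_le_sq m
    rw [hv, zero_pow two_ne_zero] at this
    exact le_antisymm (nonpos_of_mul_nonpos_right this hu) (hδ _)
  have hcubic := h.cubic_inequality rfl rfl hv hw
  have : 0 < Δ_[1] γ m * (Δ_[1] γ m + γ m) := mul_pos hu (add_pos_of_pos_of_nonneg hu (hγ m))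
  nlinarith

lemma HasSplitDifferenceJensen.fwdDiff_strictAnti_of_lt (h : HasSplitDifferenceJensen γ)
    (hγ : ∀ m, 0 ≤ γ m) (hδ : ∀ m, 0 ≤ Δ_[1] γ m) {k : ℕ}
    (hlt : Δ_[1] γ (k + 1) < Δ_[1] γ k) (i : ℕ) :
    Δ_[1] γ (k + i + 1) < Δ_[1] γ (k + i) := by
  induction i with
  | zero => exact hlt
  | succ i ih =>
    have hpos := h.fwdDiff_pos_of_lt hγ hδ ih
    have hlc := h.fwdDiff.mul_le_sq (k + i)
    rw [← add_assoc]
    nlinarith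

lemma le_sqrt_of_cubic_inequality {M u R S : ℝ} (hu : 0 < u) (huM : u ≤ M) (hR0 : 0 ≤ R)
    (hR1 : R ≤ 1) (hSR : S ≤ R)
    (h : (u * (u - R * u) + M * (S * (R * u) - 2 * (R * u) + u)) ^ 2 ≤
      4 * (u ^ 2 + M * (u - R * u)) * ((R * u) ^ 2 - u * (S * (R * u)))) :
    1 - 2 * R + R * S ≤ √(8 * (R * (R - S))) := by
  rcases le_or_gt (1 - 2 * R + R * S) 0 with hA | hA
  · exact hA.trans (Real.sqrt_nonneg _)
  have hM : 0 < M := hu.trans_le huM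
  have : 0 ≤ R * (R - S) := mul_nonneg hR0 (sub_nonneg.2 hSR)
  refine Real.le_sqrt_of_sq_le (le_of_mul_le_mul_left ?_ (show 0 < (M * u) ^ 2 by positivity))
  calc (M * u) ^ 2 * (1 - 2 * R + R * S) ^ 2
      = (M * u * (1 - 2 * R + R * S)) ^ 2 := by ring
    _ ≤ (u ^ 2 * (1 - R) + M * u * (1 - 2 * R + R * S)) ^ 2 := by
        gcongr
        exact le_add_of_nonneg_left (mul_nonneg (sq_nonneg u) (sub_nonneg.2 hR1))
    _ ≤ 4 * (u * u + M * (u * (1 - R))) * (u ^ 2 * (R * (R - S))) := by linarith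
    _ ≤ 4 * (M * M + M * (M * 1)) * (u ^ 2 * (R * (R - S))) := by
        gcongr
        linarith
    _ = (M * u) ^ 2 * (8 * (R * (R - S))) := by ring

/-- If the differences decreased somewhere, their successive ratios would decrease to a limit
`L < 1`, for which the limit of the cubic inequalities reads `(1 - L) ^ 2 ≤ 0`. -/
lemma HasSplitDifferenceJensen.fwdDiff_fwdDiff_nonneg (h : HasSplitDifferenceJensen γ)
    (hγ : ∀ m, 0 ≤ γ m) (hδ : ∀ m, 0 ≤ Δ_[1] γ m) (k : ℕ) : 0 ≤ Δ_[1] (Δ_[1] γ) k := by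
  by_contra! hneg
  set δ := Δ_[1] γ with hδ_def
  have hanti : ∀ i, δ (k + i + 1) < δ (k + i) :=
    h.fwdDiff_strictAnti_of_lt hγ hδ (sub_neg.1 hneg)
  have hpos : ∀ i, 0 < δ (k + i) := fun i => (hδ _).trans_lt (hanti i)
  let r : ℕ → ℝ := fun i => δ (k + i + 1) / δ (k + i)
  have hr_mul : ∀ i, r i * δ (k + i) = δ (k + i + 1) := fun i => div_mul_cancel₀ _ (hpos i).ne'
  have hr0 : ∀ i, 0 ≤ r i := fun i => div_nonneg (hδ _) (hδ _)
  have hr1 : ∀ i, r i < 1 := fun i => (div_lt_one (hpos i)).2 (hanti i)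
  have hr_anti : Antitone r := antitone_nat_of_succ_le fun i => by
    have hlc : δ (k + i) * δ (k + i + 2) ≤ δ (k + i + 1) ^ 2 := h.fwdDiff.mul_le_sq (k + i)
    refine (div_le_div_iff₀ (hpos (i + 1)) (hpos i)).2 ?_
    exact (mul_comm _ _).trans_le (hlc.trans_eq (pow_two _))
  have hlim : Tendsto r atTop (𝓝 (⨅ i, r i)) :=
    tendsto_atTop_ciInf hr_anti ⟨0, by rintro _ ⟨i, rfl⟩; exact hr0 i⟩
  have hineq : ∀ i, 1 - 2 * r (i + 1) + r (i + 1) * r (i + 2) ≤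
      √(8 * (r (i + 1) * (r (i + 1) - r (i + 2)))) := fun i => by
    refine le_sqrt_of_cubic_inequality (M := γ (k + (i + 1))) (hpos (i + 1)) ?_ (hr0 _) (hr1 _).le
      (hr_anti (Nat.le_succ _))
      (h.cubic_inequality rfl rfl (hr_mul (i + 1)).symm ?_)
    · have : γ (k + (i + 1)) = γ (k + i) + δ (k + i) := by simp [hδ_def, fwdDiff, add_assoc]
      have : δ (k + (i + 1)) < δ (k + i) := hanti i
      linarith [hγ (k + i)]
    · rw [hr_mul (i + 1)]
      exact (hr_mul (i + 2)).symm
  set L := ⨅ i, r i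
  have hL1 : L < 1 := (hr_anti.le_of_tendsto hlim 0).trans_lt (hr1 0)
  have h1 := hlim.comp (tendsto_add_atTop_nat 1)
  have h2 := hlim.comp (tendsto_add_atTop_nat 2)
  have hle : 1 - 2 * L + L * L ≤ √(8 * (L * (L - L))) :=
    le_of_tendsto_of_tendsto' ((tendsto_const_nhds.sub (h1.const_mul 2)).add (h1.mul h2))
      (((h1.mul (h1.sub h2)).const_mul 8).sqrt) hineq
  rw [sub_self, mul_zero, mul_zero, Real.sqrt_zero] at hle
  nlinarith

lemma HasSplitDifferenceJensen.iterate_fwdDiff (h : HasSplitDifferenceJensen γ)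
    (hγ : ∀ m, 0 ≤ γ m) (hδ : ∀ m, 0 ≤ Δ_[1] γ m) (j : ℕ) :
    HasSplitDifferenceJensen ((Δ_[1])^[j] γ) ∧ (∀ m, 0 ≤ (Δ_[1])^[j] γ m) ∧
      ∀ m, 0 ≤ Δ_[1] ((Δ_[1])^[j] γ) m := by
  induction j with
  | zero => exact ⟨h, hγ, hδ⟩
  | succ j ih =>
    obtain ⟨hj, hj0, hj1⟩ := ih
    rw [Function.iterate_succ_apply']
    exact ⟨hj.fwdDiff, hj1, hj.fwdDiff_fwdDiff_nonneg hj0 hj1⟩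

end DifferencePositivity

section MultiplierSequences

variable {q : ℕ → ℝ[X]} {γ : ℕ → ℝ}

lemma isMultiplierSeqFor_iff_splits : IsMultiplierSeqFor q γ ↔ ∀ (n : ℕ) (a : ℕ → ℝ),
    (∑ k ∈ Finset.range n, C (a k) * q k).Splits →
      (∑ k ∈ Finset.range n, C (γ k * a k) * q k).Splits := by
  simp only [IsMultiplierSeqFor, hyperbolic_iff_splits]

lemma IsMultiplierSeqFor.const_mul (h : IsMultiplierSeqFor q γ) (c : ℝ) :
    IsMultiplierSeqFor q fun k => c * γ k := by
  rw [isMultiplierSeqFor_iff_splits] at h ⊢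
  intro n a ha
  simpa only [C_mul, mul_assoc, Finset.mul_sum] using (Splits.C c).mul (h n a ha)

lemma IsMultiplierSeqFor.rescale (h : IsMultiplierSeqFor q γ) (c : ℕ → ℝ) :
    IsMultiplierSeqFor (fun k => C (c k) * q k) γ := by
  intro n a ha
  simp only [← mul_assoc, ← C_mul] at ha ⊢
  simpa only [mul_assoc] using h n (fun k => a k * c k) ha

lemma isMultiplierSeqFor_of_tendsto {ι : Type*} {l : Filter ι} [l.NeBot] {g : ι → ℕ → ℝ}
    (hg : ∀ᶠ i in l, IsMultiplierSeqFor q (g i))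
    (hlim : ∀ k, Tendsto (fun i => g i k) l (𝓝 (γ k))) : IsMultiplierSeqFor q γ := by
  simp only [isMultiplierSeqFor_iff_splits] at hg ⊢
  intro n a ha
  refine splits_of_tendsto_aeval (hg.mono fun i hi => hi n a ha) fun z => ?_
  simp only [map_sum, map_mul, aeval_C]
  exact tendsto_finsetSum _ fun k _ =>
    ((((Complex.continuous_ofReal.tendsto _).comp (hlim k)).mul_const _).mul_const _)

end MultiplierSequences

section Hermite

variable {γ : ℕ → ℝ}

lemma derivative_hermite_succ (n : ℕ) :
    derivative (hermite (n + 1)) = ((n : ℤ[X]) + 1) * hermite n := by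
  induction n with
  | zero => simp
  | succ n ih =>
    have hconst : derivative ((n : ℤ[X]) + 1) = 0 := by simp
    rw [hermite_succ (n + 1), derivative_sub, derivative_mul, derivative_X, ih, derivative_mul,
      hconst]
    push_cast
    linear_combination (-((n : ℤ[X]) + 1)) * hermite_succ n

/-- The probabilists' Hermite polynomials with complex coefficients. -/
noncomputable def hermiteC (n : ℕ) : ℂ[X] := (hermiteR n).map (algebraMap ℝ ℂ)

lemma hermiteR_succ (n : ℕ) :
    hermiteR (n + 1) = X * hermiteR n - derivative (hermiteR n) := by
  simp [hermiteR, derivative_map]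

lemma hermiteC_succ (n : ℕ) :
    hermiteC (n + 1) = X * hermiteC n - derivative (hermiteC n) := by
  simp [hermiteC, hermiteR_succ, derivative_map]

lemma derivative_hermiteC_succ (n : ℕ) :
    derivative (hermiteC (n + 1)) = C ((n : ℂ) + 1) * hermiteC n := by
  rw [hermiteC, hermiteR, derivative_map, derivative_map, derivative_hermite_succ]
  simp [hermiteC, hermiteR]

lemma hermiteC_zero : hermiteC 0 = 1 := by simp [hermiteC, hermiteR]

lemma isUpperStable_hermiteC (n : ℕ) : IsUpperStable (hermiteC n) := by
  induction n with
  | zero => simpa [hermiteC_zero] using isUpperStable_C one_ne_zero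
  | succ n ih =>
    rw [hermiteC_succ, ← zero_add (X * _ - _)]
    exact ih.add_X_mul_sub_derivative fun z _ => by simp

lemma splits_hermiteR_add (n : ℕ) (a b : ℝ) :
    (C a * hermiteR n + C b * hermiteR (n + 1)).Splits := by
  have hsplits (m : ℕ) : (hermiteR m).Splits :=
    splits_of_isUpperStable_map (isUpperStable_hermiteC m)
  rcases eq_or_ne b 0 with rfl | hb
  · simpa using (Splits.C a).mul (hsplits n)
  have hn := isUpperStable_hermiteC n
  have hcombination : C a * hermiteR n + C b * hermiteR (n + 1) =
      C b * (C (a / b) * hermiteR n + (X * hermiteR n - derivative (hermiteR n))) := by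
    rw [← hermiteR_succ, mul_add, ← mul_assoc, ← C_mul, mul_div_cancel₀ a hb]
  rw [hcombination]
  refine (Splits.C b).mul (splits_of_isUpperStable_map ?_)
  simp only [Polynomial.map_add, Polynomial.map_mul, Polynomial.map_sub, map_C, map_X,
    ← derivative_map]
  refine hn.add_X_mul_sub_derivative fun z hz => ?_
  change 0 ≤ (eval z (C ((a / b : ℝ) : ℂ) * hermiteC n) / eval z (hermiteC n)).im
  rw [eval_mul, eval_C, mul_div_cancel_right₀ _ (hn z hz), Complex.ofReal_im]

lemma hermiteR_comp_C_mul_X {ε : ℝ} (hε : ε ^ 2 = 1) (n : ℕ) :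
    (hermiteR n).comp (C ε * X) = C (ε ^ n) * hermiteR n := by
  induction n with
  | zero => simp [hermiteR]
  | succ n ih =>
    have hderiv : derivative ((hermiteR n).comp (C ε * X)) =
        C ε * (derivative (hermiteR n)).comp (C ε * X) := by
      simp [derivative_comp]
    rw [ih, derivative_C_mul] at hderiv
    have hC : (C ε : ℝ[X]) ^ 2 = 1 := by rw [← C_pow, hε, C_1]
    rw [hermiteR_succ, sub_comp, mul_comp, X_comp, ih, pow_succ', C_mul]
    linear_combination C ε * hderiv + (derivative (hermiteR n)).comp (C ε * X) * hC

lemma IsMultiplierSeqFor.twist_hermiteR (h : IsMultiplierSeqFor hermiteR γ) {ε : ℝ}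
    (hε : ε ^ 2 = 1) : IsMultiplierSeqFor hermiteR fun k => ε ^ k * γ k := by
  rw [isMultiplierSeqFor_iff_splits] at h ⊢
  intro n a ha
  have hcomp := splits_comp_C_mul_X (h n a ha) ε
  simp only [Polynomial.sum_comp, mul_comp, C_comp, hermiteR_comp_C_mul_X hε] at hcomp
  refine (congrArg Splits (Finset.sum_congr rfl fun k _ => ?_)).mp hcomp
  simp only [C_mul]
  ring

/-- The operator multiplying the `k`-th Hermite polynomial by `γ k` preserves the complex
polynomials without zeros in the open upper half plane. -/
def IsStableHermiteMS (γ : ℕ → ℝ) : Prop :=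
  ∃ T : ℂ[X] →ₗ[ℂ] ℂ[X], (∀ k, T (hermiteC k) = C (γ k : ℂ) * hermiteC k) ∧
    ∀ p, IsUpperStable p → IsUpperStable (T p)

lemma isStableHermiteMS_one : IsStableHermiteMS fun _ => 1 :=
  ⟨LinearMap.id, by simp, by simp⟩

lemma IsStableHermiteMS.const_mul_add_natCast_mul_pred (h : IsStableHermiteMS γ) {c : ℝ}
    (hc : 0 < c) : IsStableHermiteMS fun k => c * γ k + k * γ (k - 1) := by
  obtain ⟨T, hT, hstable⟩ := h
  refine ⟨(c : ℂ) • T + (LinearMap.mulLeft ℂ X - derivative) ∘ₗ T ∘ₗ derivative, fun k => ?_,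
    fun p hp => ?_⟩
  · cases k with
    | zero =>
      have hT0 := hT 0
      rw [hermiteC_zero] at hT0
      simp [hermiteC_zero, hT0, smul_eq_C_mul]
    | succ k =>
      have hTd : T (derivative (hermiteC (k + 1))) = C (((k : ℂ) + 1) * γ k) * hermiteC k := by
        rw [derivative_hermiteC_succ, ← smul_eq_C_mul, map_smul, hT, smul_eq_C_mul, C_mul,
          mul_assoc]
      simp only [LinearMap.add_apply, LinearMap.smul_apply, LinearMap.comp_apply,
        LinearMap.sub_apply, LinearMap.mulLeft_apply, hT, hTd, derivative_C_mul, smul_eq_C_mul,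
        Nat.add_sub_cancel]
      push_cast
      simp only [C_add, C_mul]
      linear_combination (-(C (k : ℂ) + C 1) * C (γ k : ℂ)) * hermiteC_succ k
  · simpa [smul_eq_C_mul] using isUpperStable_C_mul_map_add_X_mul_sub_derivative hstable hc hp

lemma IsStableHermiteMS.isMultiplierSeqFor (h : IsStableHermiteMS γ) :
    IsMultiplierSeqFor hermiteR γ := by
  obtain ⟨T, hT, hstable⟩ := h
  rw [isMultiplierSeqFor_iff_splits]
  intro n a ha
  have hmap : (∑ k ∈ Finset.range n, C (γ k * a k) * hermiteR k).map (algebraMap ℝ ℂ) =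
      T ((∑ k ∈ Finset.range n, C (a k) * hermiteR k).map (algebraMap ℝ ℂ)) := by
    simp only [Polynomial.map_sum, Polynomial.map_mul, map_C, map_sum]
    refine Finset.sum_congr rfl fun k _ => ?_
    change _ * hermiteC k = T (_ * hermiteC k)
    rw [← smul_eq_C_mul (algebraMap ℝ ℂ (a k)), map_smul, hT, smul_eq_C_mul]
    simp only [map_mul, Complex.coe_algebraMap]
    ring
  by_cases h0 : ∑ k ∈ Finset.range n, C (a k) * hermiteR k = 0
  · rw [h0, Polynomial.map_zero, map_zero, Polynomial.map_eq_zero] at hmap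
    rw [hmap]
    exact .zero
  · exact splits_of_isUpperStable_map (hmap ▸ hstable _ (isUpperStable_map_of_splits ha h0))

/-- The sequence `k ↦ ∑ j, qⱼ k (k - 1) ⋯ (k - j + 1)` attached to a polynomial `q = ∑ j, qⱼ X ^ j`.
Multiplying `q` by `X + c` turns the sequence `γ` into `k ↦ c γ k + k γ (k - 1)`. -/
noncomputable def fallingSeq (q : ℝ[X]) (k : ℕ) : ℝ :=
  ∑ j ∈ Finset.range (k + 1), q.coeff j * k.descFactorial j

lemma fallingSeq_one : fallingSeq 1 = fun _ => 1 := by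
  funext k
  simp [fallingSeq, coeff_one]

lemma fallingSeq_C_mul (c : ℝ) (q : ℝ[X]) (k : ℕ) :
    fallingSeq (C c * q) k = c * fallingSeq q k := by
  simp only [fallingSeq, Finset.mul_sum, coeff_C_mul, mul_assoc]

lemma fallingSeq_X_mul (q : ℝ[X]) (k : ℕ) : fallingSeq (X * q) k = k * fallingSeq q (k - 1) := by
  cases k with
  | zero => simp [fallingSeq]
  | succ k =>
    rw [fallingSeq, Finset.sum_range_succ']
    simp only [coeff_X_mul, coeff_X_mul_zero, zero_mul, add_zero, Nat.add_sub_cancel, fallingSeq,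
      Finset.mul_sum, Nat.succ_descFactorial_succ]
    refine Finset.sum_congr rfl fun j _ => ?_
    push_cast
    ring

lemma fallingSeq_X_sub_C_mul (r : ℝ) (q : ℝ[X]) (k : ℕ) :
    fallingSeq ((X - C r) * q) k = -r * fallingSeq q k + k * fallingSeq q (k - 1) := by
  rw [← fallingSeq_X_mul, ← fallingSeq_C_mul]
  simp only [fallingSeq, ← Finset.sum_add_distrib, ← add_mul, ← coeff_add]
  simp only [sub_mul, C_neg, neg_add_eq_sub]

lemma isStableHermiteMS_fallingSeq_prod {s : Multiset ℝ} (hs : ∀ r ∈ s, r < 0) :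
    IsStableHermiteMS (fallingSeq (s.map fun r => X - C r).prod) := by
  induction s using Multiset.induction_on with
  | empty => simpa [fallingSeq_one] using isStableHermiteMS_one
  | cons r s ih =>
    have htail := ih fun x hx => hs x (Multiset.mem_cons_of_mem hx)
    have hcons := htail.const_mul_add_natCast_mul_pred
      (neg_pos.2 (hs r (Multiset.mem_cons_self r s)))
    simpa only [Multiset.map_cons, Multiset.prod_cons, ← fallingSeq_X_sub_C_mul] using hcons

end Hermite

section NewtonSeries

lemma isMultiplierSeqFor_fallingSeq_prod {s : Multiset ℝ} (hs : ∀ r ∈ s, r ≤ 0) :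
    IsMultiplierSeqFor hermiteR (fallingSeq (s.map fun r => X - C r).prod) := by
  let g (ε : ℝ) : ℕ → ℝ := fallingSeq ((s.map (· - ε)).map fun r => X - C r).prod
  have hcont (k : ℕ) : Continuous fun ε => g ε k := by
    clear hs
    simp only [g]
    induction s using Multiset.induction_on generalizing k with
    | empty => simpa using continuous_const
    | cons r s ih =>
      simp only [Multiset.map_cons, Multiset.prod_cons, fallingSeq_X_sub_C_mul]
      have h₁ := ih k
      have h₂ := ih (k - 1)
      fun_prop
  refine isMultiplierSeqFor_of_tendsto (g := g) (l := 𝓝[>] 0) ?_ fun k => ?_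
  · filter_upwards [self_mem_nhdsWithin] with ε (hε : 0 < ε)
    refine (isStableHermiteMS_fallingSeq_prod fun r hr => ?_).isMultiplierSeqFor
    obtain ⟨x, hx, rfl⟩ := Multiset.mem_map.1 hr
    linarith [hs x hx]
  · simpa [g] using ((hcont k).tendsto 0).mono_left nhdsWithin_le_nhds

lemma nonpos_of_isRoot_of_coeff_nonneg {q : ℝ[X]} (hq : q ≠ 0) (h0 : ∀ j, 0 ≤ q.coeff j) {r : ℝ}
    (hr : q.IsRoot r) : r ≤ 0 := by
  by_contra! hpos
  refine hr.not_gt ?_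
  rw [eval_eq_sum_range]
  refine Finset.sum_pos' (fun i _ => mul_nonneg (h0 i) (by positivity))
    ⟨q.natDegree, Finset.self_mem_range_succ _, mul_pos ?_ (by positivity)⟩
  exact (h0 _).lt_of_ne' (leadingCoeff_ne_zero.2 hq)

lemma isMultiplierSeqFor_fallingSeq {q : ℝ[X]} (hq : q.Splits) (h0 : ∀ j, 0 ≤ q.coeff j) :
    IsMultiplierSeqFor hermiteR (fallingSeq q) := by
  have hfactor : fallingSeq q = fun k =>
      q.leadingCoeff * fallingSeq (q.roots.map fun r => X - C r).prod k := by
    funext k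
    rw [← fallingSeq_C_mul, ← hq.eq_prod_roots]
  rw [hfactor]
  refine (isMultiplierSeqFor_fallingSeq_prod fun r hr => ?_).const_mul _
  exact nonpos_of_isRoot_of_coeff_nonneg (ne_zero_of_mem_roots hr) h0 (isRoot_of_mem_roots hr)

/-- By Newton's formula `γ` is the limit of the sequences attached to the polynomials
`∑ j, (n choose j) n ^ (-j) Δ^j γ (0) X ^ j`. -/
lemma HasSplitDifferenceJensen.isMultiplierSeqFor_hermiteR {γ : ℕ → ℝ}
    (h : HasSplitDifferenceJensen γ) (hγ : ∀ m, 0 ≤ γ m) (hδ : ∀ m, 0 ≤ Δ_[1] γ m) :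
    IsMultiplierSeqFor hermiteR γ := by
  let q (n : ℕ) : ℝ[X] := (jensen n fun j => (Δ_[1])^[j] γ 0).comp (C (n : ℝ)⁻¹ * X)
  have hcoeff (n j : ℕ) : (q n).coeff j = n.choose j * (Δ_[1])^[j] γ 0 * (n : ℝ)⁻¹ ^ j := by
    simp only [q, comp_C_mul_X_coeff, coeff_jensen]
  refine isMultiplierSeqFor_of_tendsto (g := fun n => fallingSeq (q n)) (l := atTop)
    (.of_forall fun n => isMultiplierSeqFor_fallingSeq (splits_comp_C_mul_X (h 0 n) _) fun j => ?_)
    fun k => ?_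
  · have := (h.iterate_fwdDiff hγ hδ j).2.1 0
    rw [hcoeff]
    positivity
  have hnewton : γ k = ∑ j ∈ Finset.range (k + 1), (Δ_[1])^[j] γ 0 * k.choose j := by
    simpa [mul_comm] using shift_eq_sum_fwdDiff_iter 1 γ k 0
  have hone : Tendsto (fun n : ℕ => n * (n : ℝ)⁻¹) atTop (𝓝 1) :=
    tendsto_const_nhds.congr' <| (eventually_ne_atTop 0).mono fun n hn =>
      (mul_inv_cancel₀ (Nat.cast_ne_zero.2 hn)).symm
  rw [hnewton]
  refine tendsto_finsetSum _ fun j _ => ?_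
  have hlim := (ProbabilityTheory.tendsto_choose_mul_pow_atTop j hone).mul_const
    ((Δ_[1])^[j] γ 0 * k.descFactorial j)
  have hvalue : (1 : ℝ) ^ j / j.factorial * ((Δ_[1])^[j] γ 0 * k.descFactorial j) =
      (Δ_[1])^[j] γ 0 * k.choose j := by
    rw [Nat.descFactorial_eq_factorial_mul_choose]
    push_cast
    field_simp
    ring
  rw [hvalue] at hlim
  refine hlim.congr fun n => ?_
  rw [hcoeff]
  ring

end NewtonSeries

section SimpleSets

variable {S : Polynomial.Sequence ℝ} {γ : ℕ → ℝ} {T : ℝ[X] →ₗ[ℝ] ℝ[X]}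

/-- `T` multiplies the `k`-th member of the simple set `S` by `γ k`, and preserves
real-rootedness. -/
structure IsMultiplierOperator (S : Polynomial.Sequence ℝ) (γ : ℕ → ℝ) (T : ℝ[X] →ₗ[ℝ] ℝ[X]) :
    Prop where
  map_apply : ∀ k, T (S k) = C (γ k) * S k
  splits_map : ∀ p : ℝ[X], p.Splits → (T p).Splits

lemma isUnit_leadingCoeff_sequence (S : Polynomial.Sequence ℝ) (k : ℕ) :
    IsUnit (S k).leadingCoeff := (leadingCoeff_ne_zero.2 (S.ne_zero k)).isUnit

lemma IsMultiplierSeqFor.exists_isMultiplierOperator (h : IsMultiplierSeqFor S γ) :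
    ∃ T, IsMultiplierOperator S γ T := by
  let B := S.basis (isUnit_leadingCoeff_sequence S)
  have hB (k : ℕ) : B k = S k := S.basis_eq_self _ k
  let T := B.constr ℝ fun k => C (γ k) * S k
  have hT (k : ℕ) : T (S k) = C (γ k) * S k := by rw [← hB k, B.constr_basis, hB]
  refine ⟨T, hT, fun p hp => ?_⟩
  obtain ⟨n, hn⟩ := (B.repr p).support.exists_nat_subset_range
  have hexpand : p = ∑ k ∈ Finset.range n, C (B.repr p k) * S k := by
    conv_lhs => rw [← B.linearCombination_repr p]
    rw [Finsupp.linearCombination_apply, Finsupp.sum_of_support_subset _ hn _ (by simp)]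
    simp only [hB, smul_eq_C_mul]
  have hmap : T p = ∑ k ∈ Finset.range n, C (γ k * B.repr p k) * S k := by
    conv_lhs => rw [hexpand, map_sum]
    refine Finset.sum_congr rfl fun k _ => ?_
    rw [← smul_eq_C_mul, map_smul, hT, smul_eq_C_mul, mul_comm (γ k), C_mul, mul_assoc]
  rw [hmap]
  rw [hexpand] at hp
  exact isMultiplierSeqFor_iff_splits.1 h n _ hp

lemma IsMultiplierOperator.degree_map_lt (hT : IsMultiplierOperator S γ T) {p : ℝ[X]} {m : ℕ}
    (hp : p.degree < m) : (T p).degree < m := by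
  rw [← mem_degreeLT] at hp ⊢
  rw [← S.span_degreeLT fun i _ => isUnit_leadingCoeff_sequence S i] at hp
  refine Submodule.span_le (p := (degreeLT ℝ m).comap T).2 ?_ hp
  rintro _ ⟨i, hi, rfl⟩
  rw [SetLike.mem_coe, Submodule.mem_comap, hT.map_apply, ← smul_eq_C_mul]
  exact (degreeLT ℝ m).smul_mem _ (mem_degreeLT.2 (by rw [S.degree_eq]; exact_mod_cast hi))

lemma IsMultiplierOperator.coeff_map_congr (hT : IsMultiplierOperator S γ T) {p r : ℝ[X]}
    {m j : ℕ} (h : (p - r).degree < m) (hj : m ≤ j) : (T p).coeff j = (T r).coeff j := by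
  rw [← sub_eq_zero, ← coeff_sub, ← map_sub]
  exact coeff_eq_zero_of_degree_lt ((hT.degree_map_lt h).trans_le (by exact_mod_cast hj))

lemma IsMultiplierOperator.coeff_map_of_natDegree_le (hT : IsMultiplierOperator S γ T) {p : ℝ[X]}
    {k : ℕ} (hp : p.natDegree ≤ k) : (T p).coeff k = γ k * p.coeff k := by
  have hlead : (S k).coeff k ≠ 0 := by
    simpa only [leadingCoeff, S.natDegree_eq] using leadingCoeff_ne_zero.2 (S.ne_zero k)
  have hlt : (p - C (p.coeff k / (S k).coeff k) * S k).degree < k := by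
    refine (degree_lt_iff_coeff_zero _ _).2 fun j hj => ?_
    rw [coeff_sub, coeff_C_mul]
    rcases hj.eq_or_lt with rfl | hj
    · rw [div_mul_cancel₀ _ hlead, sub_self]
    · rw [coeff_eq_zero_of_natDegree_lt (hp.trans_lt hj),
        coeff_eq_zero_of_natDegree_lt ((S.natDegree_eq k).trans_lt hj), mul_zero, sub_zero]
  rw [hT.coeff_map_congr hlt le_rfl, ← smul_eq_C_mul, map_smul, hT.map_apply, coeff_smul,
    coeff_C_mul, smul_eq_mul]
  field_simp

lemma IsMultiplierOperator.natDegree_map_le (hT : IsMultiplierOperator S γ T) (p : ℝ[X]) :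
    (T p).natDegree ≤ p.natDegree :=
  natDegree_le_iff_coeff_eq_zero.2 fun _ hj =>
    coeff_eq_zero_of_degree_lt <| (hT.degree_map_lt <|
      degree_le_natDegree.trans_lt <| by exact_mod_cast p.natDegree.lt_succ_self).trans_le <| by
        exact_mod_cast hj

lemma tendsto_pow_mul_aeval_inv_mul {R : ℝ[X]} {k : ℕ} (hR : R.natDegree ≤ k) (z : ℂ) :
    Tendsto (fun ε : ℝ => (ε : ℂ) ^ k * aeval ((ε : ℂ)⁻¹ * z) R) (𝓝[≠] 0)
      (𝓝 (R.coeff k * z ^ k)) := by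
  let F (ε : ℝ) : ℂ := ∑ i ∈ Finset.range (k + 1), (R.coeff i : ℂ) * z ^ i * (ε : ℂ) ^ (k - i)
  have hF : Continuous F := by fun_prop
  have hF0 : F 0 = R.coeff k * z ^ k := by
    simp only [F]
    rw [Finset.sum_range_succ, Finset.sum_eq_zero fun i hi => ?_]
    · simp
    · have := Finset.mem_range.1 hi
      simp [zero_pow (show k - i ≠ 0 by omega)]
  rw [← hF0]
  refine ((hF.tendsto 0).mono_left nhdsWithin_le_nhds).congr' ?_
  filter_upwards [self_mem_nhdsWithin] with ε (hε : ε ≠ 0)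
  have hε' : (ε : ℂ) ≠ 0 := Complex.ofReal_ne_zero.2 hε
  rw [aeval_eq_sum_range' (Nat.lt_succ_of_le hR), Finset.mul_sum]
  refine Finset.sum_congr rfl fun i hi => ?_
  rw [pow_sub₀ _ hε' (Nat.lt_succ_iff.1 (Finset.mem_range.1 hi)), mul_pow, inv_pow,
    Complex.real_smul]
  ring

/-- Conjugating the operator with the dilation by `ε` and letting `ε` tend to `0`, only its
diagonal part with respect to the monomials survives. -/
lemma IsMultiplierOperator.isMultiplierSeqFor_X_pow (hT : IsMultiplierOperator S γ T) :
    IsMultiplierSeqFor (fun k => X ^ k) γ := by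
  rw [isMultiplierSeqFor_iff_splits]
  intro n a ha
  let P (ε : ℝ) : ℝ[X] :=
    (T ((∑ k ∈ Finset.range n, C (a k) * X ^ k).comp (C ε * X))).comp (C ε⁻¹ * X)
  have hP (ε : ℝ) (z : ℂ) : aeval z (P ε) =
      ∑ k ∈ Finset.range n, a k * ((ε : ℂ) ^ k * aeval ((ε : ℂ)⁻¹ * z) (T (X ^ k))) := by
    have hdilate : (∑ k ∈ Finset.range n, C (a k) * X ^ k).comp (C ε * X) =
        ∑ k ∈ Finset.range n, (a k * ε ^ k) • X ^ k := by
      simp only [Polynomial.sum_comp, mul_comp, C_comp, pow_comp, X_comp, mul_pow, smul_eq_C_mul,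
        C_mul, C_pow, mul_assoc]
    simp only [P, hdilate, map_sum, map_smul, aeval_comp, map_mul, aeval_C, aeval_X,
      Complex.real_smul, Complex.coe_algebraMap]
    refine Finset.sum_congr rfl fun k _ => ?_
    push_cast
    ring
  refine splits_of_tendsto_aeval (P := P) (l := 𝓝[≠] 0)
    (.of_forall fun ε => splits_comp_C_mul_X (hT.splits_map _ (splits_comp_C_mul_X ha ε)) _)
    fun z => ?_
  simp only [hP, map_sum, map_mul, map_pow, aeval_C, aeval_X, Complex.coe_algebraMap]
  refine tendsto_finsetSum _ fun k _ => ?_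
  have hlim :=
    tendsto_pow_mul_aeval_inv_mul ((hT.natDegree_map_le _).trans (natDegree_X_pow_le k)) z
  rw [hT.coeff_map_of_natDegree_le (natDegree_X_pow_le k), coeff_X_pow_self, mul_one] at hlim
  convert hlim.const_mul (a k : ℂ) using 2
  ring

end SimpleSets

section ClassicalMultiplierSequences

variable {γ : ℕ → ℝ}

lemma IsMultiplierSeqFor.splits_of_coeff_eq (h : IsMultiplierSeqFor (fun k => X ^ k) γ)
    {p q : ℝ[X]} (hp : p.Splits) (hq : ∀ k, q.coeff k = γ k * p.coeff k) : q.Splits := by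
  have hq_sum : q = ∑ k ∈ Finset.range (p.natDegree + 1), C (γ k * p.coeff k) * X ^ k := by
    ext j
    simp only [finsetSum_coeff, coeff_C_mul, coeff_X_pow, mul_ite, mul_one, mul_zero,
      Finset.sum_ite_eq, hq]
    split_ifs with hj
    · rfl
    · rw [coeff_eq_zero_of_natDegree_lt (by simpa using hj), mul_zero]
  rw [hq_sum]
  exact isMultiplierSeqFor_iff_splits.1 h _ _ (by rwa [← as_sum_range_C_mul_X_pow])

lemma IsMultiplierSeqFor.splits_jensen (h : IsMultiplierSeqFor (fun k => X ^ k) γ) (m n : ℕ) :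
    (jensen n fun k => γ (k + m)).Splits := by
  have hprod : (X ^ m * jensen n fun k => γ (k + m)).Splits := by
    refine h.splits_of_coeff_eq (p := X ^ m * (X + C 1) ^ n)
      ((Splits.X_pow m).mul ((Splits.X_add_C 1).pow n)) fun k => ?_
    rw [coeff_X_pow_mul', coeff_X_pow_mul']
    split_ifs with hk
    · rw [coeff_jensen, coeff_X_add_C_pow, Nat.sub_add_cancel hk, one_pow, one_mul, mul_comm]
    · rw [mul_zero]
  exact (splits_mul_iff_right (pow_ne_zero m X_ne_zero) (.X_pow m)).1 hprod

lemma IsMultiplierSeqFor.hasSplitDifferenceJensen (h : IsMultiplierSeqFor (fun k => X ^ k) γ) :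
    HasSplitDifferenceJensen γ := .of_splits_jensen h.splits_jensen

lemma splits_X_sq_sub_C {b : ℝ} (hb : 0 ≤ b) : (X ^ 2 - C b : ℝ[X]).Splits := by
  have hfactor : (X ^ 2 - C b : ℝ[X]) = (X - C √b) * (X + C √b) := by
    have : (C √b : ℝ[X]) ^ 2 = C b := by rw [← C_pow, Real.sq_sqrt hb]
    linear_combination this
  rw [hfactor]
  exact (Splits.X_sub_C _).mul (.X_add_C _)

lemma IsMultiplierSeqFor.mul_add_two_nonneg (h : IsMultiplierSeqFor (fun k => X ^ k) γ) (k : ℕ) :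
    0 ≤ γ k * γ (k + 2) := by
  have hsplits : (C (γ (k + 2)) * X ^ (k + 2) - C (γ k) * X ^ k).Splits := by
    refine h.splits_of_coeff_eq (p := X ^ k * (X ^ 2 - C 1))
      ((Splits.X_pow k).mul (splits_X_sq_sub_C zero_le_one)) fun j => ?_
    rw [mul_sub, ← pow_add, C_1, mul_one]
    simp only [coeff_sub, coeff_C_mul, coeff_X_pow]
    split_ifs <;> simp_all
  have := coeff_mul_coeff_add_two_nonpos hsplits (n := k) (by simp [coeff_X_pow])
  simpa [coeff_X_pow] using this

lemma IsMultiplierSeqFor.eq_zero_of_gap (h : IsMultiplierSeqFor (fun k => X ^ k) γ) {k : ℕ}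
    (h0 : γ k ≠ 0) (h1 : γ (k + 1) = 0) {j : ℕ} (hj : k < j) : γ j = 0 := by
  have h2 : γ (k + 2) = 0 := by
    have hle := h.hasSplitDifferenceJensen.mul_le_sq k
    rw [h1, zero_pow two_ne_zero] at hle
    exact (mul_eq_zero.1 (le_antisymm hle (h.mul_add_two_nonneg k))).resolve_left h0
  obtain ⟨n, rfl⟩ := Nat.exists_eq_add_of_lt hj
  have hdeg := natDegree_eq_zero_of_splits_of_coeff_eq_zero (h.splits_jensen k (n + 1))
    (by simpa [coeff_jensen])
    (by simp [coeff_jensen, add_comm 1 k, h1]) (by simp [coeff_jensen, add_comm 2 k, h2])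
  have hcoeff := coeff_eq_zero_of_natDegree_lt (hdeg.trans_lt n.succ_pos)
  rw [coeff_jensen, Nat.choose_self, Nat.cast_one, one_mul] at hcoeff
  rwa [add_assoc, add_comm]

end ClassicalMultiplierSequences

section AlternatingSequences

/-- A simple set of monic polynomials `S n = x ^ n - b x ^ (n - 2) + e x ^ (n - 4) - ⋯` of the
parity of `n`, with `b` and `e` positive. Only these three coefficients of the Legendre polynomials
matter for the argument. -/
structure IsMonicAlternating (S : Polynomial.Sequence ℝ) : Prop where
  monic : ∀ n, (S n).Monic
  coeff_of_odd_add : ∀ n k, Odd (n + k) → (S n).coeff k = 0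
  coeff_add_two_neg : ∀ k, (S (k + 2)).coeff k < 0
  coeff_add_four_pos : ∀ k, 0 < (S (k + 4)).coeff k

variable {S : Polynomial.Sequence ℝ} {γ : ℕ → ℝ} {T : ℝ[X] →ₗ[ℝ] ℝ[X]}

lemma coeff_sequence_eq_zero_of_lt (S : Polynomial.Sequence ℝ) {n k : ℕ} (h : n < k) :
    (S n).coeff k = 0 := coeff_eq_zero_of_natDegree_lt ((S.natDegree_eq n).trans_lt h)

lemma IsMonicAlternating.coeff_self (hS : IsMonicAlternating S) (n : ℕ) : (S n).coeff n = 1 := by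
  simpa only [Monic, leadingCoeff, S.natDegree_eq] using hS.monic n

lemma IsMonicAlternating.degree_sub_lt (hS : IsMonicAlternating S) (u w : ℝ) (k : ℕ) :
    (C u * X ^ (k + 4) + C (w + u * (S (k + 4)).coeff (k + 2)) * X ^ (k + 2) -
      (C u * S (k + 4) + C w * S (k + 2) -
        C (w * (S (k + 2)).coeff k + u * (S (k + 4)).coeff k) * S k)).degree <
      (k : WithBot ℕ) := by
  refine (degree_lt_iff_coeff_zero _ _).2 fun j hj => ?_
  obtain ⟨i, rfl⟩ := Nat.exists_eq_add_of_le hj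
  have hzero {n m : ℕ} (h : n < m) := coeff_sequence_eq_zero_of_lt S h
  simp only [coeff_add, coeff_sub, coeff_C_mul, coeff_X_pow]
  match i with
  | 0 => simp [hS.coeff_self, add_comm]
  | 1 =>
    simp [hzero (show k < k + 1 by omega), hS.coeff_of_odd_add (k + 4) (k + 1) ⟨k + 2, by ring⟩,
      hS.coeff_of_odd_add (k + 2) (k + 1) ⟨k + 1, by ring⟩]
  | 2 => simp [hS.coeff_self, hzero (show k < k + 2 by omega), add_comm]
  | 3 =>
    simp [hzero (show k < k + 3 by omega), hzero (show k + 2 < k + 3 by omega),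
      hS.coeff_of_odd_add (k + 4) (k + 3) ⟨k + 3, by ring⟩]
  | 4 =>
    simp [hS.coeff_self, hzero (show k < k + 4 by omega), hzero (show k + 2 < k + 4 by omega)]
  | i + 5 =>
    simp [hzero (show k < k + (i + 5) by omega), hzero (show k + 2 < k + (i + 5) by omega),
      hzero (show k + 4 < k + (i + 5) by omega)]

/-- The image of the given polynomial lacks its terms of degree `k + 1` and `k + 4`; the inequality
says that its coefficients of degree `k` and `k + 2` do not have the same sign. -/
lemma IsMultiplierOperator.mul_nonpos_of_splits (hT : IsMultiplierOperator S γ T)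
    (hS : IsMonicAlternating S) {u w : ℝ} {k : ℕ}
    (hP : (C u * X ^ (k + 4) + C (w + u * (S (k + 4)).coeff (k + 2)) * X ^ (k + 2)).Splits)
    (hu : u * γ (k + 4) = 0) :
    w * γ (k + 2) * (w * (S (k + 2)).coeff k * (γ (k + 2) - γ k) - u * (S (k + 4)).coeff k * γ k) ≤
      0 := by
  set δ := w * (S (k + 2)).coeff k + u * (S (k + 4)).coeff k with hδ
  have hmap : T (C u * S (k + 4) + C w * S (k + 2) - C δ * S k) =
      C (w * γ (k + 2)) * S (k + 2) - C (δ * γ k) * S k := by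
    simp only [← smul_eq_C_mul, map_add, map_sub, map_smul, hT.map_apply, smul_smul, hu, zero_smul,
      zero_add]
  have hcoeff {j : ℕ} (hj : k ≤ j) := hT.coeff_map_congr (hS.degree_sub_lt u w k) hj
  simp only [← hδ, hmap, coeff_sub, coeff_C_mul] at hcoeff
  have h1 := coeff_mul_coeff_add_two_nonpos (hT.splits_map _ hP) (n := k) <| by
    rw [hcoeff (by omega), hS.coeff_of_odd_add (k + 2) (k + 1) ⟨k + 1, by ring⟩,
      coeff_sequence_eq_zero_of_lt S (by omega), mul_zero, mul_zero, sub_zero]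
  rw [hcoeff le_rfl, hcoeff (by omega), hS.coeff_self, hS.coeff_self,
    coeff_sequence_eq_zero_of_lt S (show k < k + 2 by omega)] at h1
  linarith

lemma IsMultiplierOperator.mul_sub_nonneg (hT : IsMultiplierOperator S γ T)
    (hS : IsMonicAlternating S) (k : ℕ) : 0 ≤ γ (k + 2) * (γ (k + 2) - γ k) := by
  have h := hT.mul_nonpos_of_splits hS (u := 0) (w := 1) (k := k)
    (by simp) (zero_mul _)
  nlinarith [hS.coeff_add_two_neg k]

/-- Otherwise `X ^ (k + 2) * (X ^ 2 - C (b + η))` with a suitable `η > 0` is mapped to a polynomial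
whose three highest coefficients have the signs `-`, `0`, `-`. -/
lemma IsMultiplierOperator.add_four_ne_zero (hT : IsMultiplierOperator S γ T)
    (hS : IsMonicAlternating S) {k : ℕ} (hpos : 0 < γ k * γ (k + 2)) : γ (k + 4) ≠ 0 := by
  intro hzero
  set b := -(S (k + 4)).coeff (k + 2) with hb
  set b' := -(S (k + 2)).coeff k with hb'
  set e := (S (k + 4)).coeff k
  have hb_pos : 0 < b := neg_pos.2 (hS.coeff_add_two_neg (k + 2))
  have hb'_pos : 0 < b' := neg_pos.2 (hS.coeff_add_two_neg k)
  have he_pos : 0 < e := hS.coeff_add_four_pos k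
  have hγ : γ (k + 2) ≠ 0 := right_ne_zero_of_mul hpos.ne'
  set η := e * (γ k * γ (k + 2)) / (b' * γ (k + 2) ^ 2) with hη
  have hη_pos : 0 < η := by positivity
  have hη_mul : η * b' * γ (k + 2) ^ 2 = e * (γ k * γ (k + 2)) := by rw [hη]; field_simp
  have hP : (X ^ (k + 2) * (X ^ 2 - C (b + η)) : ℝ[X]).Splits :=
    (Splits.X_pow _).mul (splits_X_sq_sub_C (by positivity))
  have hP_eq : X ^ (k + 2) * (X ^ 2 - C (b + η)) = C 1 * X ^ (k + 4) +
      C (-η + 1 * (S (k + 4)).coeff (k + 2)) * X ^ (k + 2) := by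
    rw [show -η + 1 * (S (k + 4)).coeff (k + 2) = -(b + η) by rw [hb]; ring, C_neg, C_1]
    ring
  have h := hT.mul_nonpos_of_splits hS (hP_eq ▸ hP) (by rw [hzero, mul_zero])
  rw [show (S (k + 2)).coeff k = -b' by rw [hb', neg_neg]] at h
  have : 0 < η * (η * b' * (γ k * γ (k + 2))) := by positivity
  nlinarith

lemma IsMultiplierOperator.abs_le_abs_succ (hT : IsMultiplierOperator S γ T)
    (hS : IsMonicAlternating S) {k : ℕ} (hk : γ (k + 2) ≠ 0) : |γ k| ≤ |γ (k + 1)| := by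
  have hclassical := hT.isMultiplierSeqFor_X_pow
  have habs : |γ k| * |γ (k + 2)| = γ k * γ (k + 2) := by
    rw [← abs_mul, abs_of_nonneg (hclassical.mul_add_two_nonneg k)]
  have hle : |γ k| ≤ |γ (k + 2)| := by
    refine le_of_mul_le_mul_right ?_ (abs_pos.2 hk)
    rw [habs, abs_mul_abs_self]
    linarith [hT.mul_sub_nonneg hS k]
  refine sq_le_sq.1 ?_
  calc γ k ^ 2 = |γ k| * |γ k| := by rw [abs_mul_abs_self, sq]
    _ ≤ |γ k| * |γ (k + 2)| := by gcongr
    _ = γ k * γ (k + 2) := habs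
    _ ≤ γ (k + 1) ^ 2 := hclassical.hasSplitDifferenceJensen.mul_le_sq k

end AlternatingSequences

section SignPattern

variable {γ : ℕ → ℝ}

lemma eq_zero_off_pair_or_eventually_ne_zero
    (hgap : ∀ k, γ k ≠ 0 → γ (k + 1) = 0 → ∀ j, k < j → γ j = 0)
    (hstep : ∀ k, γ k ≠ 0 → γ (k + 2) ≠ 0 → γ (k + 4) ≠ 0) :
    (∃ l, ∀ k, k ≠ l → k ≠ l + 1 → γ k = 0) ∨
      ∃ l, (∀ k < l, γ k = 0) ∧ ∀ k, l ≤ k → γ k ≠ 0 := by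
  classical
  by_cases hzero : ∀ k, γ k = 0
  · exact .inl ⟨0, fun k _ _ => hzero k⟩
  push Not at hzero
  obtain ⟨l, hl, hlt⟩ : ∃ l, γ l ≠ 0 ∧ ∀ k < l, γ k = 0 :=
    ⟨Nat.find hzero, Nat.find_spec hzero, fun k hk => not_not.1 (Nat.find_min hzero hk)⟩
  rcases eq_or_ne (γ (l + 2)) 0 with hl2 | hl2
  · refine .inl ⟨l, fun k hk hk' => ?_⟩
    rcases lt_or_ge k l with hkl | hkl
    · exact hlt k hkl
    by_cases hl1 : γ (l + 1) = 0
    · exact hgap _ hl hl1 k (by omega)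
    · exact hgap _ hl1 hl2 k (by omega)
  have heven (i : ℕ) : γ (l + 2 * i) ≠ 0 ∧ γ (l + 2 * i + 2) ≠ 0 := by
    induction i with
    | zero => exact ⟨hl, hl2⟩
    | succ i ih => exact ⟨ih.2, hstep _ ih.1 ih.2⟩
  refine .inr ⟨l, hlt, fun k hk => ?_⟩
  induction k, hk using Nat.le_induction with
  | base => exact hl
  | succ k _ ih => exact fun h => (heven (k + 1)).1 (hgap _ ih h _ (by omega))

lemma exists_sq_eq_one_and_eq_mul_abs (x : ℝ) : ∃ a : ℝ, a ^ 2 = 1 ∧ x = a * |x| := by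
  rcases abs_choice x with h | h
  · exact ⟨1, one_pow 2, by rw [h, one_mul]⟩
  · exact ⟨-1, by norm_num, by rw [h]; ring⟩

lemma exists_eq_mul_pow_mul_abs {l : ℕ} (hlt : ∀ k < l, γ k = 0) (hne : ∀ k, l ≤ k → γ k ≠ 0)
    (hnonneg : ∀ k, 0 ≤ γ k * γ (k + 2)) :
    ∃ s ε : ℝ, s ^ 2 = 1 ∧ ε ^ 2 = 1 ∧ ∀ k, γ k = s * (ε ^ k * |γ k|) := by
  obtain ⟨a, ha, hla⟩ := exists_sq_eq_one_and_eq_mul_abs (γ l)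
  obtain ⟨b, hb, hlb⟩ := exists_sq_eq_one_and_eq_mul_abs (γ (l + 1))
  have hab : (a * b) ^ 2 = 1 := by rw [mul_pow, ha, hb, one_mul]
  generalize hε : a * b = ε at hab
  have hshift (d : ℕ) : γ (l + d) = a * ε ^ d * |γ (l + d)| := by
    induction d using Nat.twoStepInduction with
    | zero => simpa using hla
    | one =>
      rw [← hε, pow_one, ← mul_assoc, ← sq, ha, one_mul]
      exact hlb
    | more d ih _ =>
      refine mul_left_cancel₀ (hne (l + d) (by omega)) ?_
      calc γ (l + d) * γ (l + (d + 2)) = |γ (l + d)| * |γ (l + (d + 2))| := by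
            rw [← abs_mul, ← add_assoc, abs_of_nonneg (hnonneg _)]
        _ = a ^ 2 * (ε ^ 2) ^ (d + 1) * |γ (l + d)| * |γ (l + (d + 2))| := by
            rw [ha, hab, one_pow, one_mul, one_mul]
        _ = a * ε ^ d * |γ (l + d)| * (a * ε ^ (d + 2) * |γ (l + (d + 2))|) := by ring
        _ = γ (l + d) * (a * ε ^ (d + 2) * |γ (l + (d + 2))|) := by rw [← ih]
  refine ⟨a * ε ^ l, ε, by rw [mul_pow, ha, ← pow_mul', pow_mul, hab, one_pow, one_mul], hab,
    fun k => ?_⟩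
  rcases lt_or_ge k l with hk | hk
  · rw [hlt k hk, abs_zero, mul_zero, mul_zero]
  obtain ⟨d, rfl⟩ := Nat.exists_eq_add_of_le hk
  calc γ (l + d) = (ε ^ 2) ^ l * (a * ε ^ d * |γ (l + d)|) := by
        rw [hab, one_pow, one_mul]
        exact hshift d
    _ = a * ε ^ l * (ε ^ (l + d) * |γ (l + d)|) := by ring

end SignPattern

section HermiteMultiplierSequences

variable {γ : ℕ → ℝ}

lemma isMultiplierSeqFor_hermiteR_of_eq_zero {l : ℕ} (h : ∀ k, k ≠ l → k ≠ l + 1 → γ k = 0) :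
    IsMultiplierSeqFor hermiteR γ := by
  rw [isMultiplierSeqFor_iff_splits]
  intro n a _
  let c (k : ℕ) : ℝ := if k ∈ Finset.range n then γ k * a k else 0
  have hsum : ∑ k ∈ Finset.range n, C (γ k * a k) * hermiteR k =
      C (c l) * hermiteR l + C (c (l + 1)) * hermiteR (l + 1) := by
    calc ∑ k ∈ Finset.range n, C (γ k * a k) * hermiteR k
        = ∑ k ∈ Finset.range n, C (c k) * hermiteR k :=
          Finset.sum_congr rfl fun k hk => by simp only [c, if_pos hk]
      _ = C (c l) * hermiteR l + C (c (l + 1)) * hermiteR (l + 1) := by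
          refine Finset.sum_eq_add _ _ (by omega) (fun k _ hk => ?_) (fun hl => ?_) fun hl => ?_
          · simp only [c, h k hk.1 hk.2, zero_mul, ite_self, C_0]
          · simp only [c, if_neg hl, C_0, zero_mul]
          · simp only [c, if_neg hl, C_0, zero_mul]
  rw [hsum]
  exact splits_hermiteR_add l _ _

lemma IsMultiplierSeqFor.hermiteR_of_X_pow (h : IsMultiplierSeqFor (fun k => X ^ k) γ) {s ε : ℝ}
    (hs : s ^ 2 = 1) (hε : ε ^ 2 = 1) (hsign : ∀ k, γ k = s * (ε ^ k * |γ k|))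
    (hmono : Monotone fun k => |γ k|) : IsMultiplierSeqFor hermiteR γ := by
  have habs (k : ℕ) : |γ k| = s * ε ^ k * γ k := by
    conv_rhs => rw [hsign k]
    calc |γ k| = s ^ 2 * (ε ^ 2) ^ k * |γ k| := by rw [hs, hε, one_pow, one_mul, one_mul]
      _ = s * ε ^ k * (s * (ε ^ k * |γ k|)) := by ring
  have hjensen : HasSplitDifferenceJensen fun k => |γ k| := by
    refine .of_splits_jensen fun m n => ?_
    have hsplits := (Splits.C (s * ε ^ m)).mul (splits_comp_C_mul_X (h.splits_jensen m n) ε)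
    convert hsplits using 1
    ext j
    rw [coeff_C_mul, comp_C_mul_X_coeff, coeff_jensen, coeff_jensen, habs, pow_add]
    ring
  have hhermite := hjensen.isMultiplierSeqFor_hermiteR (fun _ => abs_nonneg _)
    fun k => sub_nonneg.2 (hmono k.le_succ)
  simpa only [← hsign] using (hhermite.twist_hermiteR hε).const_mul s

end HermiteMultiplierSequences

section Legendre

lemma X_sq_sub_one_pow_eq_expand (n : ℕ) :
    (X ^ 2 - 1 : ℝ[X]) ^ n = expand ℝ 2 ((X + C (-1)) ^ n) := by
  simp [sub_eq_add_neg]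

lemma natDegree_legendre_le (n : ℕ) : (legendre n).natDegree ≤ n := by
  have hpow : ((X ^ 2 - 1 : ℝ[X]) ^ n).natDegree = n * 2 := by
    rw [natDegree_pow, ← C_1, natDegree_X_pow_sub_C]
  have hderiv := natDegree_iterate_derivative ((X ^ 2 - 1 : ℝ[X]) ^ n) n
  exact (natDegree_C_mul_le _ _).trans (hderiv.trans (by omega))

lemma coeff_legendre_of_odd_add {n k : ℕ} (h : Odd (n + k)) : (legendre n).coeff k = 0 := by
  have hdvd : ¬2 ∣ k + n := by rwa [← even_iff_two_dvd, Nat.not_even_iff_odd, add_comm]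
  rw [legendre, coeff_C_mul, coeff_iterate_derivative, X_sq_sub_one_pow_eq_expand,
    coeff_expand two_pos, if_neg hdvd, smul_zero, mul_zero]

lemma neg_one_pow_mul_coeff_legendre_pos (k i : ℕ) :
    0 < (-1) ^ i * (legendre (k + 2 * i)).coeff k := by
  set n := k + 2 * i
  have hdesc : 0 < (2 * (k + i)).descFactorial n := Nat.descFactorial_pos.2 (by omega)
  have hchoose : 0 < n.choose (k + i) := Nat.choose_pos (by omega)
  have hcoeff : (legendre n).coeff k =
      (-1) ^ i * (1 / (2 ^ n * n.factorial) * ((2 * (k + i)).descFactorial n *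
        n.choose (k + i))) := by
    rw [legendre, coeff_C_mul, coeff_iterate_derivative, X_sq_sub_one_pow_eq_expand,
      show k + n = 2 * (k + i) by omega, mul_comm 2 (k + i), coeff_expand_mul two_pos,
      coeff_X_add_C_pow, show n - (k + i) = i by omega, nsmul_eq_mul]
    ring
  rw [hcoeff, ← mul_assoc, ← mul_pow, neg_one_mul, neg_neg, one_pow, one_mul]
  positivity

lemma natDegree_legendre (n : ℕ) : (legendre n).natDegree = n := by
  have h := neg_one_pow_mul_coeff_legendre_pos n 0
  exact natDegree_eq_of_le_of_coeff_ne_zero (natDegree_legendre_le n) (by simpa using h.ne')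

lemma leadingCoeff_legendre_pos (n : ℕ) : 0 < (legendre n).leadingCoeff := by
  simpa [leadingCoeff, natDegree_legendre] using neg_one_pow_mul_coeff_legendre_pos n 0

/-- The Legendre polynomials, normalized to be monic. -/
noncomputable def monicLegendre : Polynomial.Sequence ℝ where
  elems' n := C (legendre n).leadingCoeff⁻¹ * legendre n
  degree_eq' n := by
    rw [degree_C_mul (inv_ne_zero (leadingCoeff_legendre_pos n).ne'),
      degree_eq_natDegree (leadingCoeff_ne_zero.1 (leadingCoeff_legendre_pos n).ne'),
      natDegree_legendre]

lemma monicLegendre_apply (n : ℕ) :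
    monicLegendre n = C (legendre n).leadingCoeff⁻¹ * legendre n := rfl

lemma isMonicAlternating_monicLegendre : IsMonicAlternating monicLegendre where
  monic n := monic_C_mul_of_mul_leadingCoeff_eq_one
    (inv_mul_cancel₀ (leadingCoeff_legendre_pos n).ne')
  coeff_of_odd_add n k h := by
    rw [monicLegendre_apply, coeff_C_mul, coeff_legendre_of_odd_add h, mul_zero]
  coeff_add_two_neg k := by
    rw [monicLegendre_apply, coeff_C_mul]
    have h := neg_one_pow_mul_coeff_legendre_pos k 1
    exact mul_neg_of_pos_of_neg (inv_pos.2 (leadingCoeff_legendre_pos _)) (by linarith)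
  coeff_add_four_pos k := by
    rw [monicLegendre_apply, coeff_C_mul]
    have h := neg_one_pow_mul_coeff_legendre_pos k 2
    exact mul_pos (inv_pos.2 (leadingCoeff_legendre_pos _)) (by linarith)

end Legendre

theorem stmt_9_general {S : Polynomial.Sequence ℝ} (hS : IsMonicAlternating S) {γ : ℕ → ℝ}
    (h : IsMultiplierSeqFor S γ) : IsMultiplierSeqFor hermiteR γ := by
  obtain ⟨T, hT⟩ := h.exists_isMultiplierOperator
  have hclassical := hT.isMultiplierSeqFor_X_pow
  have hnonneg := hclassical.mul_add_two_nonneg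
  rcases eq_zero_off_pair_or_eventually_ne_zero (γ := γ)
    (fun _ h0 h1 _ => hclassical.eq_zero_of_gap h0 h1)
    (fun k h0 h2 => hT.add_four_ne_zero hS ((hnonneg k).lt_of_ne' (mul_ne_zero h0 h2))) with
    ⟨l, hzero⟩ | ⟨l, hzero, hne⟩
  · exact isMultiplierSeqFor_hermiteR_of_eq_zero hzero
  obtain ⟨s, ε, hs, hε, hsign⟩ := exists_eq_mul_pow_mul_abs hzero hne hnonneg
  refine hclassical.hermiteR_of_X_pow hs hε hsign (monotone_nat_of_le_succ fun k => ?_)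
  rcases lt_or_ge k l with hk | hk
  · rw [hzero k hk, abs_zero]
    exact abs_nonneg _
  · exact hT.abs_le_abs_succ hS (hne (k + 2) (by omega))

theorem stmt_9 (γ : ℕ → ℝ) (h : IsLegendreMS γ) :
    IsMultiplierSeqFor hermiteR γ :=
  stmt_9_general isMonicAlternating_monicLegendre (h.rescale _)
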